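/- arXiv:2505.14440 — 8 statements merged into one kernel-verified Lean document; each statement's English description precedes it below -/
import Mathlib

section
/- Let F be a real f×n matrix and for y ∈ ℝ^f put P(y) := {x ∈ ℝ^n : F x ≤ y componentwise}. Suppose U ⊆ ℝ^m is convex, W ⊆ ℝ^n is nonempty, d ∈ ℝ^f satisfies F w ≤ d componentwise for every w ∈ W, and Δ is the convex hull of the matrix pairs (A_1,B_1),…,(A_r,B_r). Suppose y, y⁺ ∈ ℝ^f are such that P(y) equals the convex hull of the points V_1 y, …, V_v y, and there exist u_1,…,u_v ∈ U with F(A_i (V_j y) + B_i u_j) + d ≤ y⁺ for all i ∈ {1,…,r} and j ∈ {1,…,v}. Then for every x ∈ P(y) there exists u ∈ U such that A x + B u + w ∈ P(y⁺) for every (A,B) ∈ Δ and every w ∈ W. -/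
open Matrix

/-!
The successor `A x + B u` is bilinear in the pair `(A, B)` and the pair `(x, u)`. Interpolating
the vertex inputs with the same convex weights as the vertices makes `(x, u)` a convex combination
of the vertex pairs, so the successor condition, checked at the generators of both hulls, extends
to the hulls because the target set is convex.
-/

section Convexity

variable {𝕜 E F G : Type*}

theorem map_mem_of_mem_convexHull [CommSemiring 𝕜] [PartialOrder 𝕜]
    [AddCommMonoid E] [AddCommMonoid F] [AddCommMonoid G] [Module 𝕜 E] [Module 𝕜 F] [Module 𝕜 G]
    (g : E →ₗ[𝕜] F →ₗ[𝕜] G) {S : Set E} {T : Set F} {C : Set G} (hC : Convex 𝕜 C)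
    (hg : ∀ s ∈ S, ∀ t ∈ T, g s t ∈ C) {x : E} (hx : x ∈ convexHull 𝕜 S) {z : F}
    (hz : z ∈ convexHull 𝕜 T) : g x z ∈ C := by
  have hS : ∀ s ∈ S, g s z ∈ C := fun s hs =>
    convexHull_min (hg s hs) (hC.linear_preimage (g s)) hz
  exact convexHull_min hS (hC.linear_preimage (g.flip z)) hx

theorem exists_mk_mem_convexHull_range [Semiring 𝕜] [PartialOrder 𝕜]
    [AddCommMonoid E] [AddCommMonoid F] [Module 𝕜 E] [Module 𝕜 F]
    {κ : Type*} {p : κ → E} {u : κ → F} {U : Set F} (hU : Convex 𝕜 U) (hu : ∀ j, u j ∈ U)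
    {x : E} (hx : x ∈ convexHull 𝕜 (Set.range p)) :
    ∃ u' ∈ U, (x, u') ∈ convexHull 𝕜 (Set.range fun j => (p j, u j)) := by
  have hfst : Prod.fst '' convexHull 𝕜 (Set.range fun j => (p j, u j)) =
      convexHull 𝕜 (Set.range p) := by
    simpa only [LinearMap.coe_fst, ← Set.range_comp, Function.comp_def] using
      (LinearMap.fst 𝕜 E F).image_convexHull (Set.range fun j => (p j, u j))
  obtain ⟨⟨_, u'⟩, hxu, rfl⟩ := hfst.superset hx
  have hsnd : convexHull 𝕜 (Set.range fun j => (p j, u j)) ⊆ LinearMap.snd 𝕜 E F ⁻¹' U :=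
    convexHull_min (Set.range_subset_iff.2 hu) (hU.linear_preimage _)
  exact ⟨u', hsnd hxu, hxu⟩

end Convexity

section MatrixInequalities

variable {R l n : Type*} [PartialOrder R] [Fintype n]

theorem convex_setOf_mulVec_le [CommSemiring R] [IsOrderedRing R] (F : Matrix l n R) (y : l → R) :
    Convex R {x | F *ᵥ x ≤ y} :=
  (convex_Iic y).linear_preimage F.mulVecLin

theorem mulVec_add_le_of_add_le [NonUnitalNonAssocSemiring R] [IsOrderedAddMonoid R]
    {F : Matrix l n R} {x w : n → R} {d y : l → R} (hx : F *ᵥ x + d ≤ y) (hw : F *ᵥ w ≤ d) :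
    F *ᵥ (x + w) ≤ y := by
  rw [mulVec_add]
  exact (add_le_add_right hw _).trans hx

end MatrixInequalities

section MatrixSystems

variable {𝕜 l n m : Type*} [CommSemiring 𝕜] [Fintype n] [Fintype m]

variable (𝕜 l n m) in
/-- The undisturbed successor `A x + B u` of a linear control system, as a bilinear map in the
system matrices `(A, B)` and the state–input pair `(x, u)`. -/
def successorBilin :
    Matrix l n 𝕜 × Matrix l m 𝕜 →ₗ[𝕜] (n → 𝕜) × (m → 𝕜) →ₗ[𝕜] l → 𝕜 :=
  (LinearMap.coprodEquiv 𝕜).toLinearMap ∘ₗ (mulVecBilin 𝕜 𝕜).prodMap (mulVecBilin 𝕜 𝕜)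

@[simp]
theorem successorBilin_apply (AB : Matrix l n 𝕜 × Matrix l m 𝕜) (xu : (n → 𝕜) × (m → 𝕜)) :
    successorBilin 𝕜 l n m AB xu = AB.1 *ᵥ xu.1 + AB.2 *ᵥ xu.2 :=
  rfl

theorem statement0_general [PartialOrder 𝕜] {ι κ : Type*}
    (A : ι → Matrix l n 𝕜) (B : ι → Matrix l m 𝕜)
    {U : Set (m → 𝕜)} (hU : Convex 𝕜 U) {W T : Set (l → 𝕜)} (hT : Convex 𝕜 T)
    {p : κ → n → 𝕜} {u : κ → m → 𝕜} (hu : ∀ j, u j ∈ U)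
    (hstep : ∀ i j, ∀ w ∈ W, A i *ᵥ p j + B i *ᵥ u j + w ∈ T)
    {x : n → 𝕜} (hx : x ∈ convexHull 𝕜 (Set.range p)) :
    ∃ u' ∈ U, ∀ AB ∈ convexHull 𝕜 (Set.range fun i => (A i, B i)),
      ∀ w ∈ W, AB.1 *ᵥ x + AB.2 *ᵥ u' + w ∈ T := by
  obtain ⟨u', hu', hxu⟩ := exists_mk_mem_convexHull_range hU hu hx
  refine ⟨u', hu', fun AB hAB w hw => ?_⟩
  have hvertex : ∀ θ ∈ Set.range (fun i => (A i, B i)), ∀ z ∈ Set.range (fun j => (p j, u j)),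
      successorBilin 𝕜 l n m θ z ∈ (fun q => q + w) ⁻¹' T := by
    rintro _ ⟨i, rfl⟩ _ ⟨j, rfl⟩
    simpa only [successorBilin_apply, Set.mem_preimage] using hstep i j w hw
  simpa only [successorBilin_apply, Set.mem_preimage] using
    map_mem_of_mem_convexHull _ (hT.translate_preimage_left w) hvertex hAB hxu

end MatrixSystems

/-- If `P(y)` is the convex hull of the vertex points `V j *ᵥ y` and there exist
vertex inputs `u j ∈ U` satisfying the one-step configuration-constrained inequalities, then for
every state `x ∈ P(y)` there is an input `u ∈ U` steering the uncertain system into `P(y⁺)`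
for every matrix pair in `Δ` and every disturbance in `W`. -/
theorem statement0
    {f n m r v : ℕ}
    (F : Matrix (Fin f) (Fin n) ℝ)
    (V : Fin v → Matrix (Fin n) (Fin f) ℝ)
    (A : Fin r → Matrix (Fin n) (Fin n) ℝ)
    (B : Fin r → Matrix (Fin n) (Fin m) ℝ)
    (U : Set (Fin m → ℝ)) (hU : Convex ℝ U)
    (W : Set (Fin n → ℝ)) (hW : W.Nonempty)
    (d : Fin f → ℝ) (hd : ∀ w ∈ W, F *ᵥ w ≤ d)
    (y yplus : Fin f → ℝ)
    (hP : {x : Fin n → ℝ | F *ᵥ x ≤ y} =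
      convexHull ℝ (Set.range fun j : Fin v => (V j) *ᵥ y))
    (u : Fin v → Fin m → ℝ) (hu : ∀ j, u j ∈ U)
    (hinv : ∀ (i : Fin r) (j : Fin v),
      F *ᵥ (A i *ᵥ ((V j) *ᵥ y) + B i *ᵥ u j) + d ≤ yplus) :
    ∀ x : Fin n → ℝ, F *ᵥ x ≤ y →
      ∃ u' ∈ U, ∀ AB ∈ convexHull ℝ (Set.range fun i : Fin r => (A i, B i)),
        ∀ w ∈ W, F *ᵥ (AB.1 *ᵥ x + AB.2 *ᵥ u' + w) ≤ yplus := fun _ hx =>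
  statement0_general A B hU (convex_setOf_mulVec_le F yplus) hu
    (fun i j w hw => mulVec_add_le_of_add_le (hinv i j) (hd w hw)) (hP.subset hx)
end

section
/- Let F be a real f×n matrix, P(y) := {x ∈ ℝ^n : F x ≤ y componentwise}, W ⊆ ℝ^n a nonempty compact set, and d ∈ ℝ^f with d_k = sup{(F w)_k : w ∈ W} for every row index k. Let Δ be the convex hull of matrix pairs (A_1,B_1),…,(A_r,B_r). Suppose y, y⁺ ∈ ℝ^f satisfy: V_j y ∈ P(y) for every j ∈ {1,…,v}, and for every x ∈ P(y) there exists u ∈ U with A x + B u + w ∈ P(y⁺) for all (A,B) ∈ Δ and all w ∈ W. Then there exist u_1,…,u_v ∈ U such that F(A_i (V_j y) + B_i u_j) + d ≤ y⁺ for all i ∈ {1,…,r} and j ∈ {1,…,v}. -/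
open Matrix

/-! Since `d` is the least upper bound of `F W`, a robust constraint `F (z + w) ≤ y⁺` for all
`w ∈ W` is the single tightened constraint `F z + d ≤ y⁺`. Choosing an admissible input at each
vertex and reading off its guarantee at each generator of `Δ` therefore gives the claim. -/

theorem isLUB_image_pi_of_isCompact {X ι : Type*} {α : ι → Type*} [TopologicalSpace X]
    [∀ i, ConditionallyCompleteLinearOrder (α i)] [∀ i, TopologicalSpace (α i)]
    [∀ i, ClosedIciTopology (α i)] {g : X → ∀ i, α i} {s : Set X}
    (hs : IsCompact s) (hne : s.Nonempty) (hg : ContinuousOn g s) :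
    IsLUB (g '' s) fun i => sSup ((fun x => g x i) '' s) := by
  refine isLUB_pi.2 fun i => ?_
  rw [Set.image_image]
  exact (hs.image_of_continuousOn (continuousOn_pi.1 hg i)).isLUB_sSup (hne.image _)

section OrderedRing

variable {R ι κ μ ν : Type*} [NonUnitalNonAssocRing R] [PartialOrder R] [IsOrderedAddMonoid R]
  [Fintype κ]

theorem mulVec_add_le_iff_forall_of_isLUB {F : Matrix ι κ R} {W : Set (κ → R)} {d : ι → R}
    (hd : IsLUB ((F *ᵥ ·) '' W) d) (z : κ → R) (y : ι → R) :
    F *ᵥ z + d ≤ y ↔ ∀ w ∈ W, F *ᵥ (z + w) ≤ y := by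
  rw [← le_sub_iff_add_le', isLUB_le_iff hd]
  simp only [mem_upperBounds, Set.forall_mem_image, le_sub_iff_add_le', mulVec_add]

theorem statement1_general [Fintype μ] (F : Matrix ι κ R)
    (Δ : Set (Matrix κ κ R × Matrix κ μ R)) (U : Set (μ → R)) (W : Set (κ → R))
    (d : ι → R) (hd : IsLUB ((F *ᵥ ·) '' W) d) (y yplus : ι → R)
    (x : ν → κ → R) (hx : ∀ j, F *ᵥ x j ≤ y)
    (hfeas : ∀ x : κ → R, F *ᵥ x ≤ y →
      ∃ u ∈ U, ∀ AB ∈ Δ, ∀ w ∈ W, F *ᵥ (AB.1 *ᵥ x + AB.2 *ᵥ u + w) ≤ yplus) :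
    ∃ u : ν → μ → R, (∀ j, u j ∈ U) ∧
      ∀ AB ∈ Δ, ∀ j, F *ᵥ (AB.1 *ᵥ x j + AB.2 *ᵥ u j) + d ≤ yplus := by
  choose u hu hrobust using fun j => hfeas (x j) (hx j)
  exact ⟨u, hu, fun AB hAB j =>
    (mulVec_add_le_iff_forall_of_isLUB hd _ yplus).2 (hrobust j AB hAB)⟩

end OrderedRing

/-- Converse direction. If all vertex points `V j *ᵥ y` lie in `P(y)` and for every
`x ∈ P(y)` there is an admissible input robustly steering the system into `P(y⁺)`, then there
exist vertex inputs `u_1,…,u_v ∈ U` certifying the configuration-constrained inequalities with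
the rowwise support vector `d` of the compact disturbance set `W`. -/
theorem statement1
    {f n m r v : ℕ}
    (F : Matrix (Fin f) (Fin n) ℝ)
    (V : Fin v → Matrix (Fin n) (Fin f) ℝ)
    (A : Fin r → Matrix (Fin n) (Fin n) ℝ)
    (B : Fin r → Matrix (Fin n) (Fin m) ℝ)
    (U : Set (Fin m → ℝ))
    (W : Set (Fin n → ℝ)) (hWne : W.Nonempty) (hWcpt : IsCompact W)
    (d : Fin f → ℝ) (hd : ∀ k : Fin f, d k = sSup ((fun w => (F *ᵥ w) k) '' W))
    (y yplus : Fin f → ℝ)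
    (hver : ∀ j : Fin v, F *ᵥ ((V j) *ᵥ y) ≤ y)
    (hfeas : ∀ x : Fin n → ℝ, F *ᵥ x ≤ y →
      ∃ u ∈ U, ∀ AB ∈ convexHull ℝ (Set.range fun i : Fin r => (A i, B i)),
        ∀ w ∈ W, F *ᵥ (AB.1 *ᵥ x + AB.2 *ᵥ u + w) ≤ yplus) :
    ∃ u : Fin v → Fin m → ℝ, (∀ j, u j ∈ U) ∧
      ∀ (i : Fin r) (j : Fin v),
        F *ᵥ (A i *ᵥ ((V j) *ᵥ y) + B i *ᵥ u j) + d ≤ yplus := by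
  have hsup : IsLUB ((F *ᵥ ·) '' W) d := by
    rw [funext hd]
    exact isLUB_image_pi_of_isCompact hWcpt hWne (Continuous.continuousOn (by fun_prop))
  obtain ⟨u, hu, htight⟩ := statement1_general F _ U W d hsup y yplus _ hver hfeas
  exact ⟨u, hu, fun i => htight (A i, B i) (subset_convexHull ℝ _ ⟨i, rfl⟩)⟩
end

section
/- Let y_0, y_1, y_2, … be a sequence in the configuration cone 𝓔 = {y ∈ ℝ^f : E y ≤ 0}, and assume that for every y ∈ 𝓔 the polytope P(y) equals the convex hull of V_1 y, …, V_v y and V_j y ∈ P(y) for every j. Assume X ⊆ ℝ^n and U ⊆ ℝ^m are convex, W is nonempty and compact, and d_k = sup{(F w)_k : w ∈ W}. Then the sequence of sets P(y_0), P(y_1), … is a feasible robust control tube (i.e., P(y_k) ⊆ X and P(y_{k+1}) ∈ F_reach(P(y_k)) for all k) if and only if there exists a sequence of input tuples u_k = (u_{k,1},…,u_{k,v}) ∈ (ℝ^m)^v such that (y_k, u_k, y_{k+1}) ∈ S for all k ∈ ℕ. -/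
open Matrix

/-!
Feasibility of one step of the tube says that `P(y)` lies in `X` and in the one-step robust
predecessor of `P(y⁺)`. Both of these sets are convex, so it suffices to test the vertices
`V_j y`. For a fixed state and input, the successor depends linearly on the model `(A, B)`, so it
suffices to test the generators of `Δ`. Finally, robustness against `W` erodes `P(y⁺)` to
`P(y⁺ - d)`.
-/

open Set

section PontryaginDiff

variable {𝕜 M : Type*}

/-- The Pontryagin difference `Z ⊖ W`: the points that stay in `Z` under every disturbance
in `W`. -/
def pontryaginDiff [Add M] (Z W : Set M) : Set M :=
  {z | ∀ w ∈ W, z + w ∈ Z}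

theorem convex_pontryaginDiff [Semiring 𝕜] [PartialOrder 𝕜] [AddCommMonoid M] [Module 𝕜 M]
    {Z : Set M} (hZ : Convex 𝕜 Z) (W : Set M) : Convex 𝕜 (pontryaginDiff Z W) := by
  intro z hz z' hz' a b ha hb hab w hw
  have split_disturbance : a • z + b • z' + w = a • (z + w) + b • (z' + w) := by
    rw [smul_add, smul_add, add_add_add_comm, Convex.combo_self hab]
  rw [split_disturbance]
  exact hZ (hz w hw) (hz' w hw) ha hb hab

end PontryaginDiff

section Polyhedron

variable {𝕜 φ ν : Type*} [Fintype ν]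

/-- The polyhedron `P(y)` with facet normals the rows of `F` and parameter `y`. -/
def polyhedron [NonUnitalNonAssocSemiring 𝕜] [LE 𝕜] (F : Matrix φ ν 𝕜) (y : φ → 𝕜) :
    Set (ν → 𝕜) :=
  {x | F *ᵥ x ≤ y}

theorem convex_polyhedron [CommSemiring 𝕜] [PartialOrder 𝕜] [IsOrderedRing 𝕜]
    (F : Matrix φ ν 𝕜) (y : φ → 𝕜) : Convex 𝕜 (polyhedron F y) :=
  (convex_Iic y).linear_preimage F.mulVecLin

theorem pontryaginDiff_polyhedron [Ring 𝕜] [PartialOrder 𝕜] [IsOrderedAddMonoid 𝕜]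
    {F : Matrix φ ν 𝕜} {W : Set (ν → 𝕜)} {d : φ → 𝕜}
    (hd : ∀ k, IsLUB ((fun w => (F *ᵥ w) k) '' W) (d k)) (y : φ → 𝕜) :
    pontryaginDiff (polyhedron F y) W = polyhedron F (y - d) := by
  ext z
  calc z ∈ pontryaginDiff (polyhedron F y) W
      ↔ ∀ k, ∀ w ∈ W, (F *ᵥ w) k ≤ y k - (F *ᵥ z) k := by
        simp only [pontryaginDiff, polyhedron, mem_ofPred_eq, mulVec_add, Pi.le_def, Pi.add_apply,
          le_sub_iff_add_le']
        exact ⟨fun h k w hw => h w hw k, fun h w hw k => h k w hw⟩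
    _ ↔ ∀ k, d k ≤ y k - (F *ᵥ z) k :=
        forall_congr' fun k => by
          rw [isLUB_le_iff (hd k), mem_upperBounds, forall_mem_image]
    _ ↔ z ∈ polyhedron F (y - d) :=
        forall_congr' fun k => le_sub_comm

end Polyhedron

section RobustPre

variable {𝕜 ν μ : Type*} [CommSemiring 𝕜] [PartialOrder 𝕜] [Fintype ν] [Fintype μ]
  {U : Set (μ → 𝕜)} {Δ : Set (Matrix ν ν 𝕜 × Matrix ν μ 𝕜)} {W Z : Set (ν → 𝕜)}

/-- The one-step robust predecessor of `Z`: the states from which one input in `U` steers the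
system into `Z`, whatever the model in `Δ` and the disturbance in `W`. -/
def robustPre (U : Set (μ → 𝕜)) (Δ : Set (Matrix ν ν 𝕜 × Matrix ν μ 𝕜)) (W Z : Set (ν → 𝕜)) :
    Set (ν → 𝕜) :=
  {x | ∃ u ∈ U, ∀ AB ∈ Δ, AB.1 *ᵥ x + AB.2 *ᵥ u ∈ pontryaginDiff Z W}

theorem convex_robustPre (hU : Convex 𝕜 U) (hZ : Convex 𝕜 Z) :
    Convex 𝕜 (robustPre U Δ W Z) := by
  rintro x ⟨u, hu, hxu⟩ x' ⟨u', hu', hxu'⟩ a b ha hb hab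
  refine ⟨a • u + b • u', hU hu hu' ha hb hab, fun AB hAB => ?_⟩
  have successor_combo : AB.1 *ᵥ (a • x + b • x') + AB.2 *ᵥ (a • u + b • u') =
      a • (AB.1 *ᵥ x + AB.2 *ᵥ u) + b • (AB.1 *ᵥ x' + AB.2 *ᵥ u') := by
    simp only [mulVec_add, mulVec_smul, smul_add]
    abel
  rw [successor_combo]
  exact convex_pontryaginDiff hZ W (hxu AB hAB) (hxu' AB hAB) ha hb hab

theorem convex_preimage_mulVec_add_mulVec (hZ : Convex 𝕜 Z) (x : ν → 𝕜) (u : μ → 𝕜) :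
    Convex 𝕜 ((fun AB : Matrix ν ν 𝕜 × Matrix ν μ 𝕜 => AB.1 *ᵥ x + AB.2 *ᵥ u) ⁻¹' Z) := by
  intro AB hAB AB' hAB' a b ha hb hab
  have successor_combo : (a • AB + b • AB').1 *ᵥ x + (a • AB + b • AB').2 *ᵥ u =
      a • (AB.1 *ᵥ x + AB.2 *ᵥ u) + b • (AB'.1 *ᵥ x + AB'.2 *ᵥ u) := by
    simp only [Prod.fst_add, Prod.snd_add, Prod.smul_fst, Prod.smul_snd, add_mulVec,
      smul_mulVec, smul_add]
    abel
  rw [mem_preimage, successor_combo]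
  exact hZ hAB hAB' ha hb hab

theorem robustPre_convexHull (hZ : Convex 𝕜 Z) :
    robustPre U (convexHull 𝕜 Δ) W Z = robustPre U Δ W Z := by
  ext x
  exact exists_congr fun u => and_congr_right fun _ =>
    (convex_preimage_mulVec_add_mulVec (convex_pontryaginDiff hZ W) x u).convexHull_subset_iff

/-- The family `F_reach(Z)` of sets into which every state of `Z` can be steered robustly. -/
def reachFamily (U : Set (μ → 𝕜)) (Δ : Set (Matrix ν ν 𝕜 × Matrix ν μ 𝕜)) (W Z : Set (ν → 𝕜)) :
    Set (Set (ν → 𝕜)) :=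
  {Z' | Z ⊆ robustPre U Δ W Z'}

/-- A feasible robust control tube: state-feasible sets, each robustly reachable from the one
before it. -/
def IsFeasibleRobustControlTube (X : Set (ν → 𝕜)) (U : Set (μ → 𝕜))
    (Δ : Set (Matrix ν ν 𝕜 × Matrix ν μ 𝕜)) (W : Set (ν → 𝕜)) (Z : ℕ → Set (ν → 𝕜)) : Prop :=
  ∀ k, Z k ⊆ X ∧ Z (k + 1) ∈ reachFamily U Δ W (Z k)

end RobustPre

section AdmissibleSet

variable {𝕜 φ ν μ ε ι κ : Type*} [CommRing 𝕜] [PartialOrder 𝕜] [IsOrderedRing 𝕜]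
  [Fintype ν] [Fintype μ]
  {F : Matrix φ ν 𝕜} {E : Matrix ε φ 𝕜} {V : ι → Matrix ν φ 𝕜}
  {A : κ → Matrix ν ν 𝕜} {B : κ → Matrix ν μ 𝕜}
  {X : Set (ν → 𝕜)} {U : Set (μ → 𝕜)} {W : Set (ν → 𝕜)} {d : φ → 𝕜}

theorem mem_robustPre_polyhedron_iff (hd : ∀ k, IsLUB ((fun w => (F *ᵥ w) k) '' W) (d k))
    (x : ν → 𝕜) (y : φ → 𝕜) :
    x ∈ robustPre U (convexHull 𝕜 (range fun i => (A i, B i))) W (polyhedron F y) ↔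
      ∃ u ∈ U, ∀ i, F *ᵥ (A i *ᵥ x + B i *ᵥ u) + d ≤ y := by
  rw [robustPre_convexHull (convex_polyhedron F y), robustPre, pontryaginDiff_polyhedron hd]
  simp only [polyhedron, mem_ofPred_eq, forall_mem_range, le_sub_iff_add_le]

variable [Fintype φ]

/-- The set `𝕊` of admissible triples `(y, u, y⁺)`, with one input `u j` for each vertex
`V j *ᵥ y`. -/
def admissibleSet (F : Matrix φ ν 𝕜) (E : Matrix ε φ 𝕜) (V : ι → Matrix ν φ 𝕜)
    (A : κ → Matrix ν ν 𝕜) (B : κ → Matrix ν μ 𝕜) (X : Set (ν → 𝕜)) (U : Set (μ → 𝕜))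
    (d : φ → 𝕜) : Set ((φ → 𝕜) × (ι → μ → 𝕜) × (φ → 𝕜)) :=
  {(y, u, y') | E *ᵥ y ≤ 0 ∧ (∀ j, V j *ᵥ y ∈ X) ∧ (∀ j, u j ∈ U) ∧
    ∀ i j, F *ᵥ (A i *ᵥ (V j *ᵥ y) + B i *ᵥ u j) + d ≤ y'}

theorem subset_and_mem_reachFamily_iff_exists_mem_admissibleSet
    (hX : Convex 𝕜 X) (hU : Convex 𝕜 U)
    (hd : ∀ k, IsLUB ((fun w => (F *ᵥ w) k) '' W) (d k))
    {y y' : φ → 𝕜} (hy : E *ᵥ y ≤ 0)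
    (hconv : polyhedron F y = convexHull 𝕜 (range fun j => V j *ᵥ y)) :
    (polyhedron F y ⊆ X ∧ polyhedron F y' ∈
        reachFamily U (convexHull 𝕜 (range fun i => (A i, B i))) W (polyhedron F y)) ↔
      ∃ u, (y, u, y') ∈ admissibleSet F E V A B X U d := by
  have states : polyhedron F y ⊆ X ↔ ∀ j, V j *ᵥ y ∈ X := by
    rw [hconv, hX.convexHull_subset_iff, range_subset_iff]
  have inputs : polyhedron F y' ∈
        reachFamily U (convexHull 𝕜 (range fun i => (A i, B i))) W (polyhedron F y) ↔
      ∃ u : ι → μ → 𝕜, ∀ j, u j ∈ U ∧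
        ∀ i, F *ᵥ (A i *ᵥ (V j *ᵥ y) + B i *ᵥ u j) + d ≤ y' := by
    rw [reachFamily, mem_ofPred_eq, hconv,
      (convex_robustPre hU (convex_polyhedron F y')).convexHull_subset_iff, range_subset_iff]
    simp only [mem_robustPre_polyhedron_iff hd, Classical.skolem]
  rw [states, inputs, ← exists_and_left]
  refine exists_congr fun u => ?_
  simp only [admissibleSet, mem_ofPred_eq, hy, true_and, forall_and]
  rw [forall_comm (α := ι)]

theorem statement2_general (hX : Convex 𝕜 X) (hU : Convex 𝕜 U)
    (hd : ∀ k, IsLUB ((fun w => (F *ᵥ w) k) '' W) (d k))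
    (hconv : ∀ y, E *ᵥ y ≤ 0 → polyhedron F y = convexHull 𝕜 (range fun j => V j *ᵥ y))
    {y : ℕ → φ → 𝕜} (hy : ∀ k, E *ᵥ y k ≤ 0) :
    IsFeasibleRobustControlTube X U (convexHull 𝕜 (range fun i => (A i, B i))) W
        (fun k => polyhedron F (y k)) ↔
      ∃ u : ℕ → ι → μ → 𝕜, ∀ k, (y k, u k, y (k + 1)) ∈ admissibleSet F E V A B X U d :=
  (forall_congr' fun k => subset_and_mem_reachFamily_iff_exists_mem_admissibleSet hX hU hd (hy k)
    (hconv (y k) (hy k))).trans Classical.skolem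

end AdmissibleSet

/-- Proposition 1: a sequence of configuration-constrained polytopes `P(y_k)` with
`y_k ∈ 𝓔` is a feasible robust control tube if and only if there exists a sequence of vertex
input tuples `u_k` with `(y_k, u_k, y_{k+1}) ∈ 𝕊` for all `k`. -/
theorem statement2
    {f n m r v e : ℕ}
    (F : Matrix (Fin f) (Fin n) ℝ)
    (E : Matrix (Fin e) (Fin f) ℝ)
    (V : Fin v → Matrix (Fin n) (Fin f) ℝ)
    (A : Fin r → Matrix (Fin n) (Fin n) ℝ)
    (B : Fin r → Matrix (Fin n) (Fin m) ℝ)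
    (X : Set (Fin n → ℝ)) (hX : Convex ℝ X)
    (U : Set (Fin m → ℝ)) (hU : Convex ℝ U)
    (W : Set (Fin n → ℝ)) (hWne : W.Nonempty) (hWcpt : IsCompact W)
    (d : Fin f → ℝ) (hd : ∀ k : Fin f, d k = sSup ((fun w => (F *ᵥ w) k) '' W))
    (hconv : ∀ y' : Fin f → ℝ, E *ᵥ y' ≤ 0 →
      {x : Fin n → ℝ | F *ᵥ x ≤ y'} =
        convexHull ℝ (Set.range fun j : Fin v => (V j) *ᵥ y'))
    (hver : ∀ (y' : Fin f → ℝ), E *ᵥ y' ≤ 0 → ∀ j : Fin v, F *ᵥ ((V j) *ᵥ y') ≤ y')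
    (y : ℕ → Fin f → ℝ) (hy : ∀ k, E *ᵥ (y k) ≤ 0) :
    -- the sequence P(y_0), P(y_1), … is a feasible robust control tube
    (∀ k : ℕ,
        {x : Fin n → ℝ | F *ᵥ x ≤ y k} ⊆ X ∧
        ∀ x : Fin n → ℝ, F *ᵥ x ≤ y k →
          ∃ u ∈ U, ∀ AB ∈ convexHull ℝ (Set.range fun i : Fin r => (A i, B i)),
            ∀ w ∈ W, F *ᵥ (AB.1 *ᵥ x + AB.2 *ᵥ u + w) ≤ y (k + 1))
    ↔
    -- there exist vertex-input tuples with (y_k, u_k, y_{k+1}) ∈ 𝕊 for all k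
    (∃ u : ℕ → Fin v → Fin m → ℝ, ∀ k : ℕ,
        E *ᵥ (y k) ≤ 0 ∧
        (∀ j : Fin v, (V j) *ᵥ (y k) ∈ X) ∧
        (∀ j : Fin v, u k j ∈ U) ∧
        ∀ (i : Fin r) (j : Fin v),
          F *ᵥ (A i *ᵥ ((V j) *ᵥ (y k)) + B i *ᵥ (u k j)) + d ≤ y (k + 1)) := by
  have isLUB_d (k : Fin f) : IsLUB ((fun w => (F *ᵥ w) k) '' W) (d k) :=
    hd k ▸ (hWcpt.image (by fun_prop)).isLUB_sSup (hWne.image _)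
  exact statement2_general hX hU isLUB_d hconv hy
end

section
/- Let Q and R be real symmetric positive semidefinite p×p matrices, let γ ∈ (0,1), and assume Q + γ² R ⪯ R in the Loewner order. Let N ≥ 1 and ξ_0, ξ_1, …, ξ_N ∈ ℝ^p. Define L(ξ_0,…,ξ_N) := Σ_{k=0}^{N−1} ξ_kᵀ Q ξ_k + ξ_Nᵀ R ξ_N, and define the shifted sequence ξ̂_k := ξ_{k+1} for k = 0,…,N−1 and ξ̂_N := γ ξ_N. Then L(ξ̂_0,…,ξ̂_N) ≤ L(ξ_0,…,ξ_N) − ξ_0ᵀ Q ξ_0. -/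
open Matrix Finset

/-!
Both costs contain the stage costs of `ξ 1, …, ξ (N - 1)`. Once these cancel, what remains is
`q (ξ N) + r (γ ξ N) ≤ r (ξ N)` for the quadratic forms `q` and `r` of `Q` and `R`, and this is
the Loewner inequality `Q + γ² R ⪯ R` evaluated at `ξ N`.
-/

theorem sum_range_shift_add_le {M : Type*} [AddCommGroup M] [PartialOrder M]
    [IsOrderedAddMonoid M] (f : ℕ → M) (N : ℕ) {a b : M} (h : f N + a ≤ b) :
    (∑ k ∈ range N, f (k + 1)) + a ≤ (∑ k ∈ range N, f k) + b - f 0 := by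
  have shift_sum : ∑ k ∈ range N, f (k + 1) = (∑ k ∈ range N, f k) + f N - f 0 := by
    rw [← sum_range_succ, sum_range_succ', add_sub_cancel_right]
  calc
    (∑ k ∈ range N, f (k + 1)) + a = (∑ k ∈ range N, f k) + (f N + a) - f 0 := by
      rw [shift_sum]; abel
    _ ≤ (∑ k ∈ range N, f k) + b - f 0 := by gcongr

theorem star_smul_dotProduct_mulVec_smul {n 𝕜 : Type*} [Fintype n] [CommSemiring 𝕜]
    [StarRing 𝕜] (A : Matrix n n 𝕜) (c : 𝕜) (x : n → 𝕜) :
    star (c • x) ⬝ᵥ (A *ᵥ (c • x)) = star x ⬝ᵥ (((star c * c) • A) *ᵥ x) := by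
  rw [star_smul, mulVec_smul, smul_mulVec, smul_dotProduct, dotProduct_smul, dotProduct_smul,
    smul_smul]

theorem dotProduct_mulVec_le_of_posSemidef_sub {n 𝕜 : Type*} [Fintype n] [Ring 𝕜] [StarRing 𝕜]
    [PartialOrder 𝕜] [IsOrderedAddMonoid 𝕜] {A B : Matrix n n 𝕜} (h : (B - A).PosSemidef)
    (x : n → 𝕜) : star x ⬝ᵥ (A *ᵥ x) ≤ star x ⬝ᵥ (B *ᵥ x) := by
  rw [← sub_nonneg, ← dotProduct_sub, ← sub_mulVec]
  exact h.dotProduct_mulVec_nonneg x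

section CostDecrease

variable {n 𝕜 : Type*} [Fintype n] [CommRing 𝕜] [StarRing 𝕜] [PartialOrder 𝕜]
  [IsOrderedAddMonoid 𝕜] {Q R : Matrix n n 𝕜} {γ : 𝕜}

theorem stageCost_add_terminalCost_smul_le (h : (R - (Q + (star γ * γ) • R)).PosSemidef)
    (x : n → 𝕜) :
    star x ⬝ᵥ (Q *ᵥ x) + star (γ • x) ⬝ᵥ (R *ᵥ (γ • x)) ≤ star x ⬝ᵥ (R *ᵥ x) := by
  rw [star_smul_dotProduct_mulVec_smul, ← dotProduct_add, ← add_mulVec]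
  exact dotProduct_mulVec_le_of_posSemidef_sub h x

theorem statement7_general (hLoewner : (R - (Q + (star γ * γ) • R)).PosSemidef) (N : ℕ)
    (ξ : ℕ → n → 𝕜) :
    (∑ k ∈ range N, star (ξ (k + 1)) ⬝ᵥ (Q *ᵥ ξ (k + 1)))
      + star (γ • ξ N) ⬝ᵥ (R *ᵥ (γ • ξ N))
    ≤ (∑ k ∈ range N, star (ξ k) ⬝ᵥ (Q *ᵥ ξ k))
      + star (ξ N) ⬝ᵥ (R *ᵥ ξ N) - star (ξ 0) ⬝ᵥ (Q *ᵥ ξ 0) :=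
  sum_range_shift_add_le (fun k ↦ star (ξ k) ⬝ᵥ (Q *ᵥ ξ k)) N
    (stageCost_add_terminalCost_smul_le hLoewner (ξ N))

end CostDecrease

/-- the key cost-decrease (Lyapunov) inequality. If `Q + γ² R ⪯ R` in the Loewner
order, then shifting the sequence and contracting the terminal element by `γ` decreases the
quadratic tube MPC cost by at least the first stage cost. -/
theorem statement7
    {p : ℕ}
    (Q R : Matrix (Fin p) (Fin p) ℝ)
    (hQ : Q.PosSemidef) (hR : R.PosSemidef)
    (γ : ℝ) (hγ0 : 0 < γ) (hγ1 : γ < 1)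
    (hLoewner : (R - (Q + γ ^ 2 • R)).PosSemidef)
    (N : ℕ) (hN : 1 ≤ N)
    (ξ : ℕ → Fin p → ℝ) :
    (∑ k ∈ Finset.range N, (ξ (k + 1)) ⬝ᵥ (Q *ᵥ ξ (k + 1)))
      + (γ • ξ N) ⬝ᵥ (R *ᵥ (γ • ξ N))
    ≤ (∑ k ∈ Finset.range N, (ξ k) ⬝ᵥ (Q *ᵥ ξ k))
      + (ξ N) ⬝ᵥ (R *ᵥ ξ N) - (ξ 0) ⬝ᵥ (Q *ᵥ ξ 0) := by
  simpa only [star_trivial] using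
    statement7_general (by simpa only [star_trivial, ← pow_two] using hLoewner) N ξ
end

section
/- Let F be a real f×n matrix and V_1,…,V_v real n×f matrices satisfying V_j F = I_n for every j. Let y_m ∈ ℝ^f and u_{m,1},…,u_{m,v} ∈ ℝ^m satisfy F(A_i (V_j y_m) + B_i u_{m,j}) + d ≤ y_m for all i ∈ {1,…,r} and j ∈ {1,…,v}. Let α ≥ 0, α⁺ ∈ ℝ, z, z⁺ ∈ ℝ^n, and v ∈ ℝ^m satisfy F(A_i z + B_i v) + (1−α) d + α y_m ≤ α⁺ y_m + F z⁺ for all i. Then F(A_i V_j(α y_m + F z) + B_i(α u_{m,j} + v)) + d ≤ α⁺ y_m + F z⁺ for all i ∈ {1,…,r} and j ∈ {1,…,v}. -/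
open Matrix

/-! Since `V (F z) = z`, the successor of the state `V (a • y + F z)` under the input `a • u + w` is
`a` times the successor of `V y` under `u` plus the successor of `z` under `w`. Scaling the
inequality for `y` by `a ≥ 0` and adding the homothetic one recombines the disturbance terms
`a • d` and `(1 - a) • d` to `d`. -/

theorem add_add_le_of_add_one_sub_smul_add_smul_le {R Y : Type*} [Ring R] [Preorder R]
    [AddCommGroup Y] [Preorder Y] [IsOrderedAddMonoid Y] [Module R Y] [PosSMulMono R Y]
    {a : R} {p q d y c : Y} (ha : 0 ≤ a) (hp : p + d ≤ y)
    (hq : q + (1 - a) • d + a • y ≤ c) : a • p + q + d ≤ c :=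
  calc
    a • p + q + d = q + (1 - a) • d + a • (p + d) := by
      rw [smul_add, sub_smul, one_smul]
      abel
    _ ≤ q + (1 - a) • d + a • y := by gcongr
    _ ≤ c := hq

section LinearSystem

variable {R X U Y : Type*} [Ring R] [AddCommGroup X] [Module R X] [AddCommGroup U] [Module R U]
  [AddCommGroup Y] [Module R Y] {F : X →ₗ[R] Y} {V : Y →ₗ[R] X}

theorem map_smul_add_map_of_leftInverse (hVF : Function.LeftInverse V F) (a : R) (y : Y) (z : X) :
    V (a • y + F z) = a • V y + z := by
  rw [map_add, map_smul, hVF z]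

theorem map_add_map_smul_add_of_leftInverse (hVF : Function.LeftInverse V F) (A : X →ₗ[R] X)
    (B : U →ₗ[R] X) (a : R) (y : Y) (z : X) (u w : U) :
    A (V (a • y + F z)) + B (a • u + w) = a • (A (V y) + B u) + (A z + B w) := by
  rw [map_smul_add_map_of_leftInverse hVF]
  simp only [map_add, map_smul, smul_add]
  abel

/-- The bound `c` takes the place of `α⁺ y_m + F z⁺`. -/
theorem statement10_general [Preorder R] [Preorder Y] [IsOrderedAddMonoid Y] [PosSMulMono R Y]
    (hVF : Function.LeftInverse V F) (A : X →ₗ[R] X) (B : U →ₗ[R] X) {d y c : Y} {u w : U} {z : X}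
    (hy : F (A (V y) + B u) + d ≤ y) {a : R} (ha : 0 ≤ a)
    (hz : F (A z + B w) + (1 - a) • d + a • y ≤ c) :
    F (A (V (a • y + F z)) + B (a • u + w)) + d ≤ c := by
  rw [map_add_map_smul_add_of_leftInverse hVF, map_add, map_smul]
  exact add_add_le_of_add_one_sub_smul_add_smul_le ha hy hz

end LinearSystem

theorem leftInverse_mulVecLin_of_mul_eq_one {R m n : Type*} [CommSemiring R] [Fintype m]
    [Fintype n] [DecidableEq n] {M : Matrix n m R} {N : Matrix m n R} (h : M * N = 1) :
    Function.LeftInverse M.mulVecLin N.mulVecLin := fun x ↦ by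
  rw [mulVecLin_apply, mulVecLin_apply, mulVec_mulVec, h, one_mulVec]

/-- the core algebraic step of Corollary 2 — homothetic parameters satisfying the
homothetic one-step inequality yield configuration-constrained admissible inequalities. -/
theorem statement10
    {f n m r v : ℕ}
    (F : Matrix (Fin f) (Fin n) ℝ)
    (V : Fin v → Matrix (Fin n) (Fin f) ℝ)
    (hVF : ∀ j : Fin v, V j * F = (1 : Matrix (Fin n) (Fin n) ℝ))
    (A : Fin r → Matrix (Fin n) (Fin n) ℝ)
    (B : Fin r → Matrix (Fin n) (Fin m) ℝ)
    (d : Fin f → ℝ)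
    (ym : Fin f → ℝ) (um : Fin v → Fin m → ℝ)
    (hm : ∀ (i : Fin r) (j : Fin v),
      F *ᵥ (A i *ᵥ ((V j) *ᵥ ym) + B i *ᵥ um j) + d ≤ ym)
    (α : ℝ) (hα : 0 ≤ α) (αplus : ℝ)
    (z zplus : Fin n → ℝ) (vv : Fin m → ℝ)
    (hstep : ∀ i : Fin r,
      F *ᵥ (A i *ᵥ z + B i *ᵥ vv) + (1 - α) • d + α • ym ≤ αplus • ym + F *ᵥ zplus) :
    ∀ (i : Fin r) (j : Fin v),
      F *ᵥ (A i *ᵥ ((V j) *ᵥ (α • ym + F *ᵥ z)) + B i *ᵥ (α • um j + vv)) + d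
        ≤ αplus • ym + F *ᵥ zplus := fun i j ↦
  statement10_general (leftInverse_mulVecLin_of_mul_eq_one (hVF j)) (A i).mulVecLin
    (B i).mulVecLin (hm i j) hα (hstep i)
end

section
/- Assume the polytopic constraint sets X = {x : H^x x ≤ h^x} and U = {u : H^u u ≤ h^u}, and that y_m, u_{m,1},…,u_{m,v} satisfy V_j y_m ∈ X and u_{m,j} ∈ U for all j. Then: (i) the tuple ((0,1), 0, (0,1)) belongs to the homothetic admissible set S̄; (ii) S̄ is a convex subset of (ℝ^n×ℝ) × ℝ^m × (ℝ^n×ℝ); and (iii) consequently, for any γ ∈ [0,1], if ((z,α), v, (γ z, γ α + 1 − γ)) ∈ S̄, then ((γ z, γ α + 1 − γ), γ v, (γ² z, γ(γ α + 1 − γ) + 1 − γ)) ∈ S̄. -/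
open Matrix

/-
The constraints defining the set are affine in all variables jointly, hence convexity. At
`((0, 1), 0, (0, 1))` the state and input constraints say that the support vectors of the invariant
set are at most the bounds, and the dynamics constraint is an equality. Replacing a point by its
convex combination with this one, with weights `γ` and `1 - γ`, applies the update
`(z, α) ↦ (γ z, γ α + 1 - γ)` to both the state and the successor pair.
-/

theorem le_of_forall_isLUB_range_apply {ι q R : Type*} [Preorder R] {w : ι → q → R}
    {c h : q → R} (hc : ∀ k, IsLUB (Set.range fun j => w j k) (c k)) (hw : ∀ j, w j ≤ h) : c ≤ h :=
  fun k => (hc k).2 (Set.forall_mem_range.2 fun j => hw j k)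

section HomotheticTube

variable {𝕜 : Type*} [CommRing 𝕜] [PartialOrder 𝕜]

/-- The pairs `(z, α)` for which the homothetic copy `z + α P` of a set `P` satisfies `H x ≤ h`,
where `c` is the vector of suprema of the rows of `H` over `P`. It serves for states and inputs
alike; `α` is not required to be nonnegative here. -/
def homotheticPolytope {q n : Type*} [Fintype n] (H : Matrix q n 𝕜) (c h : q → 𝕜) :
    Set ((n → 𝕜) × 𝕜) :=
  {p | H *ᵥ p.1 + p.2 • c ≤ h}

/-- The tuples `((z, α), v, (z⁺, α⁺))` for which one step of the dynamics `(A, B)` is certified to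
stay in the tube with cross-sections `{x | F x ≤ F z + α y}`. The offset
`(1 - α) d + α y = d + α (y - d)` is the invariance margin `y - d` scaled by `α`, plus the
disturbance bound `d`, which does not scale. -/
def homotheticTransitions {f n m : Type*} [Fintype n] [Fintype m] (F : Matrix f n 𝕜)
    (A : Matrix n n 𝕜) (B : Matrix n m 𝕜) (d y : f → 𝕜) :
    Set (((n → 𝕜) × 𝕜) × (m → 𝕜) × ((n → 𝕜) × 𝕜)) :=
  {p | F *ᵥ (A *ᵥ p.1.1 + B *ᵥ p.2.1) + (1 - p.1.2) • d + p.1.2 • y ≤ p.2.2.2 • y + F *ᵥ p.2.2.1}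

/-- The homothetic admissible set `S̄` of tuples `((z, α), v, (z⁺, α⁺))`, with one transition
constraint for each vertex `(A i, B i)` of the uncertain dynamics. The support vectors `cx` and `cu`
stand for the paper's `h^x_m` and `h^u_m`. -/
def homotheticAdmissibleSet {f n m r qx qu : Type*} [Fintype n] [Fintype m] (F : Matrix f n 𝕜)
    (A : r → Matrix n n 𝕜) (B : r → Matrix n m 𝕜) (d y : f → 𝕜)
    (Hx : Matrix qx n 𝕜) (cx hx : qx → 𝕜) (Hu : Matrix qu m 𝕜) (cu hu : qu → 𝕜) :
    Set (((n → 𝕜) × 𝕜) × (m → 𝕜) × ((n → 𝕜) × 𝕜)) :=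
  {p | 0 ≤ p.1.2 ∧ p.1 ∈ homotheticPolytope Hx cx hx ∧
    (p.2.1, p.1.2) ∈ homotheticPolytope Hu cu hu ∧
    ∀ i, p ∈ homotheticTransitions F (A i) (B i) d y}

theorem zero_one_mem_homotheticPolytope_iff {q n : Type*} [Fintype n] {H : Matrix q n 𝕜}
    {c h : q → 𝕜} : ((0 : n → 𝕜), (1 : 𝕜)) ∈ homotheticPolytope H c h ↔ c ≤ h := by
  simp only [homotheticPolytope, Set.mem_ofPred_eq, mulVec_zero, one_smul, zero_add]

theorem zero_one_mem_homotheticTransitions {f n m : Type*} [Fintype n] [Fintype m]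
    (F : Matrix f n 𝕜) (A : Matrix n n 𝕜) (B : Matrix n m 𝕜) (d y : f → 𝕜) :
    (((0 : n → 𝕜), (1 : 𝕜)), (0 : m → 𝕜), ((0 : n → 𝕜), (1 : 𝕜))) ∈
      homotheticTransitions F A B d y := by
  simp [homotheticTransitions]

theorem zero_one_mem_homotheticAdmissibleSet [ZeroLEOneClass 𝕜]
    {f n m r qx qu : Type*} [Fintype n] [Fintype m] (F : Matrix f n 𝕜)
    (A : r → Matrix n n 𝕜) (B : r → Matrix n m 𝕜) (d y : f → 𝕜)
    (Hx : Matrix qx n 𝕜) {cx hx : qx → 𝕜} (Hu : Matrix qu m 𝕜) {cu hu : qu → 𝕜}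
    (hcx : cx ≤ hx) (hcu : cu ≤ hu) :
    (((0 : n → 𝕜), (1 : 𝕜)), (0 : m → 𝕜), ((0 : n → 𝕜), (1 : 𝕜))) ∈
      homotheticAdmissibleSet F A B d y Hx cx hx Hu cu hu :=
  ⟨zero_le_one, zero_one_mem_homotheticPolytope_iff.2 hcx,
    zero_one_mem_homotheticPolytope_iff.2 hcu,
    fun i => zero_one_mem_homotheticTransitions F (A i) (B i) d y⟩

section Convexity

variable [IsOrderedRing 𝕜]

theorem convex_homotheticPolytope {q n : Type*} [Fintype n] (H : Matrix q n 𝕜) (c h : q → 𝕜) :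
    Convex 𝕜 (homotheticPolytope H c h) :=
  (convex_Iic h).linear_preimage (H.mulVecLin.coprod (LinearMap.toSpanSingleton 𝕜 (q → 𝕜) c))

theorem convex_homotheticTransitions {f n m : Type*} [Fintype n] [Fintype m]
    (F : Matrix f n 𝕜) (A : Matrix n n 𝕜) (B : Matrix n m 𝕜) (d y : f → 𝕜) :
    Convex 𝕜 (homotheticTransitions F A B d y) := by
  rintro ⟨⟨z₁, α₁⟩, v₁, z₁', α₁'⟩ h₁ ⟨⟨z₂, α₂⟩, v₂, z₂', α₂'⟩ h₂ a b ha hb hab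
  obtain rfl : b = 1 - a := eq_sub_of_add_eq' hab
  simp only [homotheticTransitions, Set.mem_ofPred_eq] at h₁ h₂
  calc
    F *ᵥ (A *ᵥ (a • z₁ + (1 - a) • z₂) + B *ᵥ (a • v₁ + (1 - a) • v₂)) +
          (1 - (a * α₁ + (1 - a) * α₂)) • d + (a * α₁ + (1 - a) * α₂) • y
      = a • (F *ᵥ (A *ᵥ z₁ + B *ᵥ v₁) + (1 - α₁) • d + α₁ • y) +
          (1 - a) • (F *ᵥ (A *ᵥ z₂ + B *ᵥ v₂) + (1 - α₂) • d + α₂ • y) := by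
        simp only [mulVec_add, mulVec_smul]
        module
    _ ≤ a • (α₁' • y + F *ᵥ z₁') + (1 - a) • (α₂' • y + F *ᵥ z₂') := by gcongr
    _ = (a * α₁' + (1 - a) * α₂') • y + F *ᵥ (a • z₁' + (1 - a) • z₂') := by
        simp only [mulVec_add, mulVec_smul]
        module

theorem convex_homotheticAdmissibleSet {f n m r qx qu : Type*} [Fintype n] [Fintype m]
    (F : Matrix f n 𝕜) (A : r → Matrix n n 𝕜) (B : r → Matrix n m 𝕜) (d y : f → 𝕜)
    (Hx : Matrix qx n 𝕜) (cx hx : qx → 𝕜) (Hu : Matrix qu m 𝕜) (cu hu : qu → 𝕜) :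
    Convex 𝕜 (homotheticAdmissibleSet F A B d y Hx cx hx Hu cu hu) :=
  fun _ hp _ hq _ _ ha hb hab =>
    ⟨convex_Ici (0 : 𝕜) hp.1 hq.1 ha hb hab,
      convex_homotheticPolytope Hx cx hx hp.2.1 hq.2.1 ha hb hab,
      convex_homotheticPolytope Hu cu hu hp.2.2.1 hq.2.2.1 ha hb hab,
      fun i => convex_homotheticTransitions F (A i) (B i) d y (hp.2.2.2 i) (hq.2.2.2 i) ha hb hab⟩

theorem contraction_mem_of_convex {E G : Type*} [AddCommMonoid E] [Module 𝕜 E] [AddCommMonoid G]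
    [Module 𝕜 G] {S : Set ((E × 𝕜) × G × (E × 𝕜))} (hS : Convex 𝕜 S)
    (hone : ((0, 1), 0, (0, 1)) ∈ S) {γ : 𝕜} (hγ₀ : 0 ≤ γ) (hγ₁ : γ ≤ 1)
    {z z' : E} {α α' : 𝕜} {v : G} (h : ((z, α), v, (z', α')) ∈ S) :
    ((γ • z, γ * α + 1 - γ), γ • v, (γ • z', γ * α' + 1 - γ)) ∈ S := by
  simpa [add_sub_assoc] using hS h hone hγ₀ (sub_nonneg.2 hγ₁) (add_sub_cancel γ 1)

end Convexity

theorem statement12_general [IsOrderedRing 𝕜] {f n m r v qx qu : Type*}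
    [Fintype f] [Fintype n] [Fintype m]
    (F : Matrix f n 𝕜) (V : v → Matrix n f 𝕜) (A : r → Matrix n n 𝕜) (B : r → Matrix n m 𝕜)
    (d : f → 𝕜) (Hx : Matrix qx n 𝕜) (hx : qx → 𝕜) (Hu : Matrix qu m 𝕜) (hu : qu → 𝕜)
    (ym : f → 𝕜) (um : v → m → 𝕜)
    (hxm : qx → 𝕜) (hhxm : ∀ k, IsLUB (Set.range fun j => (Hx *ᵥ (V j *ᵥ ym)) k) (hxm k))
    (hum : qu → 𝕜) (hhum : ∀ k, IsLUB (Set.range fun j => (Hu *ᵥ um j) k) (hum k))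
    (hymX : ∀ j, Hx *ᵥ (V j *ᵥ ym) ≤ hx) (humU : ∀ j, Hu *ᵥ um j ≤ hu) :
    let Sbar := homotheticAdmissibleSet F A B d ym Hx hxm hx Hu hum hu
    ((0, 1), 0, (0, 1)) ∈ Sbar ∧
    Convex 𝕜 Sbar ∧
    ∀ γ : 𝕜, 0 ≤ γ → γ ≤ 1 → ∀ (z : n → 𝕜) (α : 𝕜) (w : m → 𝕜),
      ((z, α), w, (γ • z, γ * α + 1 - γ)) ∈ Sbar →
      ((γ • z, γ * α + 1 - γ), γ • w, (γ ^ 2 • z, γ * (γ * α + 1 - γ) + 1 - γ)) ∈ Sbar := by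
  intro Sbar
  have hone : ((0, 1), 0, (0, 1)) ∈ Sbar :=
    zero_one_mem_homotheticAdmissibleSet F A B d ym Hx Hu
      (le_of_forall_isLUB_range_apply hhxm hymX) (le_of_forall_isLUB_range_apply hhum humU)
  have hconvex : Convex 𝕜 Sbar := convex_homotheticAdmissibleSet F A B d ym Hx hxm hx Hu hum hu
  refine ⟨hone, hconvex, fun γ hγ₀ hγ₁ z α w h => ?_⟩
  rw [sq, mul_smul]
  exact contraction_mem_of_convex hconvex hone hγ₀ hγ₁ h

end HomotheticTube

/-- the homothetic admissible set `S̄` contains `((0,1),0,(0,1))`, is convex, and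
hence the terminal γ-contraction condition of Homothetic Tube MPC is recursively feasible. -/
theorem statement12
    {f n m r v qx qu : ℕ}
    (F : Matrix (Fin f) (Fin n) ℝ)
    (V : Fin v → Matrix (Fin n) (Fin f) ℝ)
    (A : Fin r → Matrix (Fin n) (Fin n) ℝ)
    (B : Fin r → Matrix (Fin n) (Fin m) ℝ)
    (d : Fin f → ℝ)
    (Hx : Matrix (Fin qx) (Fin n) ℝ) (hx : Fin qx → ℝ)
    (Hu : Matrix (Fin qu) (Fin m) ℝ) (hu : Fin qu → ℝ)
    (ym : Fin f → ℝ) (um : Fin v → Fin m → ℝ)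
    (hxm : Fin qx → ℝ)
    (hhxm : ∀ rr : Fin qx, IsGreatest (Set.range fun j : Fin v => (Hx *ᵥ ((V j) *ᵥ ym)) rr) (hxm rr))
    (hum : Fin qu → ℝ)
    (hhum : ∀ rr : Fin qu, IsGreatest (Set.range fun j : Fin v => (Hu *ᵥ um j) rr) (hum rr))
    -- feasibility of the RCI parameters: V_j y_m ∈ X and u_{m,j} ∈ U
    (hymX : ∀ j : Fin v, Hx *ᵥ ((V j) *ᵥ ym) ≤ hx)
    (humU : ∀ j : Fin v, Hu *ᵥ um j ≤ hu)
    (Sbar : Set (((Fin n → ℝ) × ℝ) × (Fin m → ℝ) × ((Fin n → ℝ) × ℝ)))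
    (hSbarDef : Sbar = {p : ((Fin n → ℝ) × ℝ) × (Fin m → ℝ) × ((Fin n → ℝ) × ℝ) |
      0 ≤ p.1.2 ∧
      Hx *ᵥ p.1.1 + p.1.2 • hxm ≤ hx ∧
      Hu *ᵥ p.2.1 + p.1.2 • hum ≤ hu ∧
      ∀ i : Fin r,
        F *ᵥ (A i *ᵥ p.1.1 + B i *ᵥ p.2.1) + (1 - p.1.2) • d + p.1.2 • ym
          ≤ p.2.2.2 • ym + F *ᵥ p.2.2.1}) :
    -- (i) the RCI tuple belongs to S̄
    (((0 : Fin n → ℝ), (1 : ℝ)), (0 : Fin m → ℝ), ((0 : Fin n → ℝ), (1 : ℝ))) ∈ Sbar ∧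
    -- (ii) S̄ is convex
    Convex ℝ Sbar ∧
    -- (iii) recursive feasibility of the terminal condition
    (∀ γ : ℝ, 0 ≤ γ → γ ≤ 1 →
      ∀ (z : Fin n → ℝ) (α : ℝ) (vv : Fin m → ℝ),
        ((z, α), vv, (γ • z, γ * α + 1 - γ)) ∈ Sbar →
        ((γ • z, γ * α + 1 - γ), γ • vv,
          ((γ ^ 2) • z, γ * (γ * α + 1 - γ) + 1 - γ)) ∈ Sbar) := by
  subst hSbarDef
  exact statement12_general F V A B d Hx hx Hu hu ym um hxm (fun k => (hhxm k).isLUB) hum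
    (fun k => (hhum k).isLUB) hymX humU
end

section
/- Let H be a real q×n matrix, h ∈ ℝ^q, G a real p×n matrix, and g ∈ ℝ^p, and suppose the polyhedron {x ∈ ℝ^n : H x ≤ h} is nonempty and bounded. Then {x : H x ≤ h} ⊆ {x : G x ≤ g} if and only if there exists a real p×q matrix Λ with all entries nonnegative such that Λ H = G and Λ h ≤ g componentwise. -/
open Matrix

/-!
Containment in `{x | G x ≤ g}` is a system of implications `H x ≤ h → Gᵢ ⬝ x ≤ gᵢ`, one for each row
of `G`, and each is an instance of the affine Farkas lemma, whose multipliers form a row of `Λ`.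

The affine Farkas lemma reduces to the conic one by homogenizing: if `a x ≤ h` implies `b x ≤ d`,
then `t ≥ 0` and `h t - a x ≥ 0` imply `d t - b x ≥ 0`. For `t > 0` this is rescaling. For `t = 0`
the vector `x` is a recession direction of the polyhedron, and moving along it from a feasible point
stays feasible, so `b` cannot increase along it.

The conic Farkas lemma is proved over an arbitrary ordered field by induction on the number of
functionals. If the functional `f` added to `s` is not redundant, `b` is negative at some `y` where
`s` is nonnegative, so `f y < 0`. On the kernel of `f` the constraint `f ≥ 0` is void, so there `b`
agrees with some `c` in the cone of `s`. Hence `b = c + μ f`, and evaluating at `y` gives `μ ≥ 0`.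
-/

theorem apply_nonneg_of_mem_hull {R M : Type*} [CommSemiring R] [PartialOrder R]
    [IsOrderedRing R] [AddCommMonoid M] [Module R M] {s : Set (Module.Dual R M)}
    {c : Module.Dual R M} (hc : c ∈ PointedCone.hull R s) {x : M} (hx : ∀ f ∈ s, 0 ≤ f x) :
    0 ≤ c x := by
  have hx' : x ∈ PointedCone.dual .id (PointedCone.hull R s : Set (Module.Dual R M)) := by
    rwa [PointedCone.dual_hull]
  exact hx' hc

section Homogenization

variable {R V : Type*} [CommRing R] [AddCommGroup V] [Module R V]

/-- The homogenization `(x, t) ↦ r t - f x` of the slack `r - f x` of the inequality `f x ≤ r`.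
It turns affine inequalities on `V` into linear ones on `V × R`. -/
def homogenizedSlack (f : Module.Dual R V) (r : R) : Module.Dual R (V × R) :=
  (-f).coprod (r • LinearMap.id)

theorem homogenizedSlack_apply (f : Module.Dual R V) (r : R) (x : V) (t : R) :
    homogenizedSlack f r (x, t) = r * t - f x := by
  simp [homogenizedSlack, sub_eq_neg_add]

end Homogenization

theorem eqOn_add_smul_of_eqOn_inf_ker {𝕜 V : Type*} [Field 𝕜] [AddCommGroup V] [Module 𝕜 V]
    {W : Submodule 𝕜 V} {b c f : Module.Dual 𝕜 V}
    (hbc : Set.EqOn b c (W ⊓ f.ker : Submodule 𝕜 V)) {y : V} (hy : y ∈ W) (hfy : f y ≠ 0) :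
    Set.EqOn b (c + ((b y - c y) / f y) • f : Module.Dual 𝕜 V) W := by
  intro x hx
  have hker : x - (f x / f y) • y ∈ W ⊓ f.ker :=
    ⟨W.sub_mem hx (W.smul_mem _ hy), by simp [hfy]⟩
  have hproj := hbc hker
  simp only [map_sub, map_smul, smul_eq_mul] at hproj
  simp only [LinearMap.add_apply, LinearMap.smul_apply, smul_eq_mul]
  linear_combination hproj

section Farkas

variable {𝕜 V ι : Type*} [Field 𝕜] [LinearOrder 𝕜] [IsStrictOrderedRing 𝕜]
  [AddCommGroup V] [Module 𝕜 V]

theorem exists_mem_hull_eqOn_of_forall_nonneg {s : Set (Module.Dual 𝕜 V)} (hs : s.Finite)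
    (W : Submodule 𝕜 V) {b : Module.Dual 𝕜 V}
    (hb : ∀ x ∈ W, (∀ f ∈ s, 0 ≤ f x) → 0 ≤ b x) :
    ∃ c ∈ PointedCone.hull 𝕜 s, Set.EqOn b c W := by
  induction s, hs using Set.Finite.induction_on generalizing W with
  | empty =>
    refine ⟨0, zero_mem _, fun x hx => le_antisymm ?_ (hb x hx (by simp))⟩
    simpa using hb (-x) (W.neg_mem hx) (by simp)
  | @insert f s _ _ ih =>
    by_cases hredundant : ∀ x ∈ W, (∀ f ∈ s, 0 ≤ f x) → 0 ≤ b x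
    · obtain ⟨c, hc, hbc⟩ := ih W hredundant
      exact ⟨c, Submodule.span_mono (Set.subset_insert f s) hc, hbc⟩
    · push Not at hredundant
      obtain ⟨y, hyW, hys, hby⟩ := hredundant
      have hfy : f y < 0 := by
        by_contra! hfy
        exact hby.not_ge (hb y hyW (Set.forall_mem_insert.2 ⟨hfy, hys⟩))
      obtain ⟨c, hc, hbc⟩ := ih (W ⊓ f.ker) fun x hx hxs =>
        hb x hx.1 (Set.forall_mem_insert.2 ⟨(LinearMap.mem_ker.1 hx.2).ge, hxs⟩)
      have hcy : 0 ≤ c y := apply_nonneg_of_mem_hull hc hys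
      have hμ : 0 ≤ (b y - c y) / f y := div_nonneg_of_nonpos (by linarith) hfy.le
      refine ⟨c + ((b y - c y) / f y) • f, add_mem ?_ ?_,
        eqOn_add_smul_of_eqOn_inf_ker hbc hyW hfy.ne⟩
      · exact Submodule.span_mono (Set.subset_insert f s) hc
      · exact PointedCone.smul_mem _ hμ (PointedCone.subset_hull (Set.mem_insert f s))

theorem mem_hull_of_forall_nonneg {s : Set (Module.Dual 𝕜 V)} (hs : s.Finite)
    {b : Module.Dual 𝕜 V} (hb : ∀ x, (∀ f ∈ s, 0 ≤ f x) → 0 ≤ b x) :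
    b ∈ PointedCone.hull 𝕜 s := by
  obtain ⟨c, hc, hbc⟩ := exists_mem_hull_eqOn_of_forall_nonneg hs ⊤ fun x _ => hb x
  rwa [LinearMap.ext fun x => hbc (Submodule.mem_top (x := x))]

variable {a : ι → Module.Dual 𝕜 V} {h : ι → 𝕜} {b : Module.Dual 𝕜 V} {d : 𝕜}

theorem apply_nonpos_of_recession (hne : ∃ x, ∀ i, a i x ≤ h i)
    (hb : ∀ x, (∀ i, a i x ≤ h i) → b x ≤ d) {v : V} (hv : ∀ i, a i v ≤ 0) : b v ≤ 0 := by
  obtain ⟨x₀, hx₀⟩ := hne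
  have hray (s : 𝕜) (hs : 0 ≤ s) : b x₀ + s * b v ≤ d := by
    simpa using hb (x₀ + s • v) fun i => by
      simpa using add_le_of_le_of_nonpos (hx₀ i) (mul_nonpos_of_nonneg_of_nonpos hs (hv i))
  by_contra! hbv
  have hgap : 0 ≤ d - b x₀ := sub_nonneg.2 (hb x₀ hx₀)
  have hfar := hray ((d - b x₀ + 1) / b v) (by positivity)
  rw [div_mul_cancel₀ _ hbv.ne'] at hfar
  linarith

theorem homogenizedSlack_nonneg (hne : ∃ x, ∀ i, a i x ≤ h i)
    (hb : ∀ x, (∀ i, a i x ≤ h i) → b x ≤ d) {z : V × 𝕜} (ht : 0 ≤ z.2)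
    (hz : ∀ i, 0 ≤ homogenizedSlack (a i) (h i) z) : 0 ≤ homogenizedSlack b d z := by
  obtain ⟨x, t⟩ := z
  simp only [homogenizedSlack_apply, sub_nonneg] at ht hz ⊢
  rcases ht.eq_or_lt with rfl | ht
  · rw [mul_zero]
    exact apply_nonpos_of_recession hne hb (by simpa using hz)
  · have hscaled : b (t⁻¹ • x) ≤ d := hb _ fun i => by
      simpa [inv_mul_le_iff₀ ht, mul_comm] using hz i
    simpa [inv_mul_le_iff₀ ht, mul_comm] using hscaled

theorem exists_nonneg_sum_smul_eq_of_forall_le [Fintype ι] (hne : ∃ x, ∀ i, a i x ≤ h i)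
    (hb : ∀ x, (∀ i, a i x ≤ h i) → b x ≤ d) :
    ∃ l : ι → 𝕜, 0 ≤ l ∧ ∑ i, l i • a i = b ∧ l ⬝ᵥ h ≤ d := by
  have hmem : homogenizedSlack b d ∈ PointedCone.hull 𝕜
      (insert (LinearMap.snd 𝕜 V 𝕜) (Set.range fun i => homogenizedSlack (a i) (h i))) :=
    mem_hull_of_forall_nonneg ((Set.finite_range _).insert _) fun z hz =>
      homogenizedSlack_nonneg hne hb (hz _ (Set.mem_insert _ _)) fun i =>
        hz _ (Set.mem_insert_of_mem _ (Set.mem_range_self i))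
  obtain ⟨μ, c, hc, hcomb⟩ := Submodule.mem_span_insert.1 hmem
  obtain ⟨l, rfl⟩ := (Submodule.mem_span_range_iff_exists_fun _).1 hc
  have heval (x : V) (t : 𝕜) :
      d * t - b x = μ * t + ∑ i, (l i : 𝕜) * (h i * t - a i x) := by
    simpa [homogenizedSlack_apply, ← Nonneg.coe_smul] using LinearMap.congr_fun hcomb (x, t)
  refine ⟨fun i => l i, fun i => (l i).2, ?_, ?_⟩
  · ext x
    simpa [← Nonneg.coe_smul] using (heval x 0).symm
  · have hconst : d = μ + (fun i => (l i : 𝕜)) ⬝ᵥ h := by simpa [dotProduct] using heval 0 1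
    rw [hconst]
    exact le_add_of_nonneg_left μ.2

end Farkas

section Matrix

variable {𝕜 m n k : Type*} [Field 𝕜] [LinearOrder 𝕜] [IsStrictOrderedRing 𝕜]
  [Fintype m] [Fintype n]

theorem exists_nonneg_vecMul_eq_of_forall_dotProduct_le {H : Matrix m n 𝕜} {h : m → 𝕜}
    {c : n → 𝕜} {d : 𝕜} (hne : ∃ x, H *ᵥ x ≤ h) (hc : ∀ x, H *ᵥ x ≤ h → c ⬝ᵥ x ≤ d) :
    ∃ l : m → 𝕜, 0 ≤ l ∧ l ᵥ* H = c ∧ l ⬝ᵥ h ≤ d := by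
  obtain ⟨l, hl, hlH, hlh⟩ := exists_nonneg_sum_smul_eq_of_forall_le
    (a := fun j => dotProductBilin 𝕜 𝕜 (H j)) (b := dotProductBilin 𝕜 𝕜 c) hne hc
  refine ⟨l, hl, dotProduct_eq _ _ fun x => ?_, hlh⟩
  rw [← dotProduct_mulVec]
  simpa [dotProduct, mulVec] using LinearMap.congr_fun hlH x

theorem statement16_general (H : Matrix m n 𝕜) (h : m → 𝕜) (G : Matrix k n 𝕜) (g : k → 𝕜)
    (hne : {x : n → 𝕜 | H *ᵥ x ≤ h}.Nonempty) :
    {x : n → 𝕜 | H *ᵥ x ≤ h} ⊆ {x : n → 𝕜 | G *ᵥ x ≤ g} ↔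
      ∃ Λ : Matrix k m 𝕜, (∀ i j, 0 ≤ Λ i j) ∧ Λ * H = G ∧ Λ *ᵥ h ≤ g := by
  constructor
  · intro hsub
    choose Λ hΛ hΛH hΛh using fun i =>
      exists_nonneg_vecMul_eq_of_forall_dotProduct_le (c := G i) (d := g i) hne
        fun x hx => hsub hx i
    exact ⟨Matrix.of Λ, hΛ, Matrix.ext fun i j => congrFun (hΛH i) j, hΛh⟩
  · rintro ⟨Λ, hΛ, rfl, hΛh⟩ x hx i
    calc ((Λ * H) *ᵥ x) i = Λ i ⬝ᵥ H *ᵥ x := by rw [← mulVec_mulVec]; rfl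
      _ ≤ Λ i ⬝ᵥ h := dotProduct_le_dotProduct_of_nonneg_left hx (hΛ i)
      _ ≤ g i := hΛh i

end Matrix

/-- polyhedral containment duality — for a nonempty bounded polyhedron
`{x : H x ≤ h}`, containment in `{x : G x ≤ g}` holds iff there is a nonnegative multiplier
matrix `Λ` with `Λ H = G` and `Λ h ≤ g`. -/
theorem statement16
    {q n p : ℕ}
    (H : Matrix (Fin q) (Fin n) ℝ) (h : Fin q → ℝ)
    (G : Matrix (Fin p) (Fin n) ℝ) (g : Fin p → ℝ)
    (hne : {x : Fin n → ℝ | H *ᵥ x ≤ h}.Nonempty)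
    (hbdd : Bornology.IsBounded {x : Fin n → ℝ | H *ᵥ x ≤ h}) :
    {x : Fin n → ℝ | H *ᵥ x ≤ h} ⊆ {x : Fin n → ℝ | G *ᵥ x ≤ g} ↔
      ∃ Λ : Matrix (Fin p) (Fin q) ℝ,
        (∀ (i : Fin p) (j : Fin q), 0 ≤ Λ i j) ∧ Λ * H = G ∧ Λ *ᵥ h ≤ g :=
  statement16_general H h G g hne
end

section
/- Let F be a real f×n matrix, y ∈ ℝ^f, and suppose P(y) := {x : F x ≤ y} equals the convex hull of points x_1,…,x_v ∈ ℝ^n. Let u_1,…,u_v ∈ U satisfy F(A_i x_j + B_i u_j) + d ≤ y for all i ∈ {1,…,r} and j ∈ {1,…,v}, where W ⊆ ℝ^n is nonempty and compact and d ∈ ℝ^f satisfies d_k = sup{(F w)_k : w ∈ W}. Let c ∈ ℝ^n and ζ ∈ ℝ with cᵀx ≤ ζ for every x ∈ P(y), and set d_c := sup{cᵀw : w ∈ W}. Then: (i) {x : F x ≤ y and cᵀx ≤ ζ} = P(y); and (ii) cᵀ(A_i x_j + B_i u_j) + d_c ≤ ζ for all i ∈ {1,…,r} and j ∈ {1,…,v}.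 Hence the extended template obtained by appending the row cᵀ to F and the entry ζ to y describes the same polytope, and the same vertex points and vertex inputs certify the extended robust invariance inequalities. -/
open Matrix

/-!
The tightened inequality `F z + d ≤ y` says that `z + w` stays in `P(y)` for every disturbance
`w ∈ W`. A halfspace containing `P(y)` therefore contains all the points `z + w`, and taking the
supremum of `cᵀ (z + w) ≤ ζ` over `w ∈ W` gives the tightened inequality for the new row.
-/

theorem mem_upperBounds_image_of_eq_sSup {X ι α : Type*} [TopologicalSpace X]
    [ConditionallyCompleteLinearOrder α] [TopologicalSpace α] [OrderTopology α]
    {K : Set X} (hK : IsCompact K) {g : X → ι → α} (hg : ContinuousOn g K)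
    {d : ι → α} (hd : ∀ k, d k = sSup ((fun w => g w k) '' K)) :
    d ∈ upperBounds (g '' K) := by
  rintro _ ⟨w, hw, rfl⟩ k
  have hbdd : BddAbove ((fun w => g w k) '' K) :=
    (hK.image_of_continuousOn (continuousOn_pi.mp hg k)).bddAbove
  exact (le_csSup hbdd (Set.mem_image_of_mem _ hw)).trans_eq (hd k).symm

section Template

variable {R ν : Type*} [NonUnitalNonAssocRing R] [Preorder R] [IsOrderedAddMonoid R]
  [Fintype ν]

theorem mulVec_add_le_of_mem_upperBounds {κ : Type*} {F : Matrix κ ν R} {W : Set (ν → R)}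
    {d y : κ → R} (hd : d ∈ upperBounds ((F *ᵥ ·) '' W)) {z : ν → R} (hz : F *ᵥ z + d ≤ y)
    {w : ν → R} (hw : w ∈ W) : F *ᵥ (z + w) ≤ y :=
  calc F *ᵥ (z + w) = F *ᵥ z + F *ᵥ w := mulVec_add F z w
    _ ≤ F *ᵥ z + d := by gcongr; exact hd (Set.mem_image_of_mem _ hw)
    _ ≤ y := hz

theorem dotProduct_add_le_of_isLUB {W : Set (ν → R)} {c z : ν → R} {s ζ : R}
    (hs : IsLUB ((c ⬝ᵥ ·) '' W) s) (hζ : ∀ w ∈ W, c ⬝ᵥ (z + w) ≤ ζ) : c ⬝ᵥ z + s ≤ ζ := by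
  suffices s ≤ ζ - c ⬝ᵥ z from le_sub_iff_add_le'.mp this
  refine hs.2 (Set.forall_mem_image.mpr fun w hw => le_sub_iff_add_le'.mpr ?_)
  exact (dotProduct_add c z w).symm.trans_le (hζ w hw)

theorem statement17_general {κ μ ι J : Type*} [Fintype μ]
    (F : Matrix κ ν R) (A : ι → Matrix ν ν R) (B : ι → Matrix ν μ R) (W : Set (ν → R))
    (d : κ → R) (hd : d ∈ upperBounds ((F *ᵥ ·) '' W))
    (y : κ → R) (x : J → ν → R) (u : J → μ → R)
    (hinv : ∀ i j, F *ᵥ (A i *ᵥ x j + B i *ᵥ u j) + d ≤ y)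
    (c : ν → R) (ζ : R) (hsupp : ∀ x' : ν → R, F *ᵥ x' ≤ y → c ⬝ᵥ x' ≤ ζ)
    (dc : R) (hdc : IsLUB ((c ⬝ᵥ ·) '' W) dc) :
    {x' : ν → R | F *ᵥ x' ≤ y ∧ c ⬝ᵥ x' ≤ ζ} = {x' : ν → R | F *ᵥ x' ≤ y} ∧
      ∀ i j, c ⬝ᵥ (A i *ᵥ x j + B i *ᵥ u j) + dc ≤ ζ :=
  ⟨Set.sep_eq_self_iff_mem_true.mpr hsupp, fun i j => dotProduct_add_le_of_isLUB hdc
    fun _ hw => hsupp _ (mulVec_add_le_of_mem_upperBounds hd (hinv i j) hw)⟩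

end Template

/-- appending a redundant supporting halfspace `cᵀ x ≤ ζ` to the template of an
RCI polytope `P(y)` describes the same polytope, and the same vertex points and vertex inputs
certify the extended robust invariance inequalities with `d_c = sup {cᵀ w : w ∈ W}`. -/
theorem statement17
    {f n m r v : ℕ}
    (F : Matrix (Fin f) (Fin n) ℝ)
    (A : Fin r → Matrix (Fin n) (Fin n) ℝ)
    (B : Fin r → Matrix (Fin n) (Fin m) ℝ)
    (U : Set (Fin m → ℝ))
    (W : Set (Fin n → ℝ)) (hWne : W.Nonempty) (hWcpt : IsCompact W)
    (d : Fin f → ℝ) (hd : ∀ k : Fin f, d k = sSup ((fun w => (F *ᵥ w) k) '' W))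
    (y : Fin f → ℝ)
    (x : Fin v → Fin n → ℝ)
    (hP : {x' : Fin n → ℝ | F *ᵥ x' ≤ y} = convexHull ℝ (Set.range x))
    (u : Fin v → Fin m → ℝ) (huU : ∀ j, u j ∈ U)
    (hinv : ∀ (i : Fin r) (j : Fin v), F *ᵥ (A i *ᵥ x j + B i *ᵥ u j) + d ≤ y)
    (c : Fin n → ℝ) (ζ : ℝ)
    (hsupp : ∀ x' : Fin n → ℝ, F *ᵥ x' ≤ y → c ⬝ᵥ x' ≤ ζ)
    (dc : ℝ) (hdc : dc = sSup ((fun w => c ⬝ᵥ w) '' W)) :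
    -- (i) the appended halfspace is redundant
    {x' : Fin n → ℝ | F *ᵥ x' ≤ y ∧ c ⬝ᵥ x' ≤ ζ} = {x' : Fin n → ℝ | F *ᵥ x' ≤ y} ∧
    -- (ii) the extended invariance inequalities hold
    ∀ (i : Fin r) (j : Fin v), c ⬝ᵥ (A i *ᵥ x j + B i *ᵥ u j) + dc ≤ ζ := by
  have hdc_isLUB : IsLUB ((c ⬝ᵥ ·) '' W) dc :=
    hdc ▸ (hWcpt.image (by fun_prop)).isLUB_sSup (hWne.image _)
  exact statement17_general F A B W d
    (mem_upperBounds_image_of_eq_sSup hWcpt (by fun_prop) hd) y x u hinv c ζ hsupp dc hdc_isLUB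
end
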